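/- arXiv:2509.20259 — 2 statements merged into one kernel-verified Lean document; each statement's English description precedes it below -/
import Mathlib

section
/- For every ε > 0 there exists a constant C_ε > 0 such that for all positive integers h and N with 1 ≤ h ≤ 2N², one has |Σ_{r | h, r ≤ N} Σ_{x,y} N·(x + y − N/r)/(x·y) − (2/ζ(2) − 1)·N²·(Σ_{r | h} 1/r)| ≤ C_ε · N^{1+ε}, where the inner sum is over pairs of coprime positive integers x, y with x ≤ N/r, y ≤ N/r and x + y > N/r, and the outer sum runs over positive divisors r of h with r ≤ N. -/
/-!
The pairs `(x, y)` of coprime positive integers with `x, y ≤ M < x + y` are the pairs of consecutive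
denominators of the Farey sequence of order `M`. Passing from `M` to `M + 1` replaces each pair with
`x + y = M + 1` by `(x, x + y)` and `(x + y, y)`, and
`1 / (x y) = 1 / (x (x + y)) + 1 / ((x + y) y)`; hence `∑ 1 / (x y)` does not depend on `M` and
equals `1`. A given `x` occurs in exactly `φ x` pairs, so for `Q ≥ 1` and `M = ⌊Q⌋` we get
`∑ (x + y - Q) / (x y) = 2 ∑_{x ≤ M} φ x / x - Q`. Writing `φ x / x = ∑_{d ∣ x} μ d / d` turns this
into `(2 / ζ(2) - 1) Q + O(1 + log Q)`. Taking `Q = N / r`, multiplying by `N` and summing over the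
divisors `r` of `h` leaves an error `O(d(h) N (1 + log N))`, where the number `d(h)` of divisors
is `O(N ^ δ)` for every `δ > 0`, as `h` is at most polynomial in `N`.
-/

open Finset
open scoped ArithmeticFunction.Moebius Nat

/-- The pairs `(x, y)` of denominators of consecutive fractions in the Farey sequence of order `M`,
encoded by their arithmetic characterization instead of through the fractions themselves. -/
def fareyPairs (M : ℕ) : Finset (ℕ × ℕ) :=
  {p ∈ Ioc 0 M ×ˢ Ioc 0 M | M < p.1 + p.2 ∧ p.1.Coprime p.2}

theorem mem_fareyPairs {M : ℕ} {p : ℕ × ℕ} :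
    p ∈ fareyPairs M ↔
      (0 < p.1 ∧ p.1 ≤ M) ∧ (0 < p.2 ∧ p.2 ≤ M) ∧ M < p.1 + p.2 ∧ p.1.Coprime p.2 := by
  simp only [fareyPairs, mem_filter, mem_product, mem_Ioc, and_assoc]

theorem swap_mem_fareyPairs {M : ℕ} {p : ℕ × ℕ} : p.swap ∈ fareyPairs M ↔ p ∈ fareyPairs M := by
  simp only [mem_fareyPairs, Prod.fst_swap, Prod.snd_swap, add_comm p.2,
    Nat.coprime_comm (n := p.2)]
  tauto

section Sums

variable {α : Type*} [AddCommMonoid α] {M : ℕ}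

theorem sum_fareyPairs_swap (f : ℕ × ℕ → α) :
    ∑ p ∈ fareyPairs M, f p.swap = ∑ p ∈ fareyPairs M, f p :=
  sum_nbij' Prod.swap Prod.swap (fun _ ↦ swap_mem_fareyPairs.2) (fun _ ↦ swap_mem_fareyPairs.2)
    (fun _ _ ↦ rfl) (fun _ _ ↦ rfl) (fun _ _ ↦ rfl)

theorem sum_fareyPairs_fst (f : ℕ → α) :
    ∑ p ∈ fareyPairs M, f p.1 = ∑ x ∈ Ioc 0 M, φ x • f x := by
  rw [fareyPairs, sum_filter, sum_product]
  refine sum_congr rfl fun x hx ↦ ?_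
  dsimp only
  rw [← sum_filter, sum_const, ← Nat.filter_coprime_Ico_eq_totient x (M + 1 - x)]
  congr 2
  ext y
  simp only [mem_filter, mem_Ioc, mem_Ico] at hx ⊢
  grind

theorem sum_fareyPairs_snd (f : ℕ → α) :
    ∑ p ∈ fareyPairs M, f p.2 = ∑ x ∈ Ioc 0 M, φ x • f x := by
  rw [← sum_fareyPairs_fst, ← sum_fareyPairs_swap]
  rfl

theorem filter_le_fareyPairs_succ :
    {p ∈ fareyPairs (M + 1) | p.1 ≤ M ∧ p.2 ≤ M} = {p ∈ fareyPairs M | p.1 + p.2 ≠ M + 1} := by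
  ext p
  simp only [mem_filter, mem_fareyPairs]
  grind

theorem fst_le_of_mem_fareyPairs_succ {p : ℕ × ℕ} (hp : p ∈ fareyPairs (M + 1)) (hM : 0 < M)
    (h : p.2 = M + 1) : p.1 ≤ M := by
  rw [mem_fareyPairs, h] at hp
  obtain ⟨⟨-, hle⟩, -, -, hcop⟩ := hp
  refine Nat.lt_succ_iff.1 (hle.lt_of_ne fun heq ↦ ?_)
  rw [heq, Nat.coprime_self] at hcop
  omega

theorem sum_fareyPairs_succ_snd_eq (f : ℕ × ℕ → α) (hM : 0 < M) :
    ∑ p ∈ fareyPairs (M + 1) with p.2 = M + 1, f p =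
      ∑ p ∈ fareyPairs M with p.1 + p.2 = M + 1, f (p.1, p.1 + p.2) := by
  symm
  refine sum_nbij' (fun p ↦ (p.1, p.1 + p.2)) (fun p ↦ (p.1, p.2 - p.1)) ?_ ?_ ?_ ?_ ?_ <;>
    rintro ⟨a, b⟩ h <;> rw [mem_filter] at h
  · simp only [mem_filter, mem_fareyPairs, Nat.coprime_self_add_right] at h ⊢
    grind
  · obtain ⟨hab, rfl⟩ := h
    have haM : a ≤ M := fst_le_of_mem_fareyPairs_succ hab hM rfl
    simp only [mem_filter, mem_fareyPairs] at hab ⊢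
    rw [Nat.coprime_sub_self_right hab.1.2]
    grind
  · rw [Nat.add_sub_cancel_left]
  · rw [Nat.add_sub_cancel' ((mem_fareyPairs.1 h.1).1.2.trans_eq h.2.symm)]

theorem sum_fareyPairs_succ_fst_eq (f : ℕ × ℕ → α) (hM : 0 < M) :
    ∑ p ∈ fareyPairs (M + 1) with p.1 = M + 1, f p =
      ∑ p ∈ fareyPairs M with p.1 + p.2 = M + 1, f (p.1 + p.2, p.2) := by
  have h := sum_fareyPairs_succ_snd_eq (fun p ↦ f p.swap) hM
  rw [sum_filter, sum_filter] at h ⊢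
  rw [← sum_fareyPairs_swap, ← sum_fareyPairs_swap (M := M)]
  simpa [add_comm] using h

theorem sum_fareyPairs_succ (f : ℕ × ℕ → α) (hM : 0 < M) :
    ∑ p ∈ fareyPairs (M + 1), f p =
      ∑ p ∈ fareyPairs M with p.1 + p.2 = M + 1, (f (p.1, p.1 + p.2) + f (p.1 + p.2, p.2)) +
        ∑ p ∈ fareyPairs M with p.1 + p.2 ≠ M + 1, f p := by
  rw [sum_add_distrib, ← sum_fareyPairs_succ_snd_eq f hM, ← sum_fareyPairs_succ_fst_eq f hM,
    ← filter_le_fareyPairs_succ]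
  simp only [sum_filter, ← sum_add_distrib]
  refine sum_congr rfl fun p hp ↦ ?_
  have hfst := fst_le_of_mem_fareyPairs_succ hp hM
  rw [mem_fareyPairs] at hp
  split_ifs <;> first | omega | simp

theorem sum_fareyPairs_eq_of_mediant {f : ℕ × ℕ → α}
    (hf : ∀ a b, 0 < a → 0 < b → f (a, b) = f (a, a + b) + f (a + b, b)) (hM : 0 < M) :
    ∑ p ∈ fareyPairs M, f p = f (1, 1) := by
  induction M, hM using Nat.le_induction with
  | base => exact sum_singleton f (1, 1)
  | succ M hM ih =>
    rw [sum_fareyPairs_succ f hM, ← ih,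
      ← sum_filter_add_sum_filter_not (fareyPairs M) (fun p ↦ p.1 + p.2 = M + 1)]
    congr 1
    refine sum_congr rfl fun p hp ↦ ?_
    rw [mem_filter, mem_fareyPairs] at hp
    exact (hf p.1 p.2 hp.1.1.1 hp.1.2.1.1).symm

end Sums

theorem sum_fareyPairs_one_div_mul {K : Type*} [Field K] [CharZero K] {M : ℕ} (hM : 0 < M) :
    ∑ p ∈ fareyPairs M, 1 / ((p.1 : K) * p.2) = 1 := by
  rw [sum_fareyPairs_eq_of_mediant (f := fun p : ℕ × ℕ ↦ 1 / ((p.1 : K) * p.2)) ?_ hM]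
  · simp
  intro a b ha hb
  have ha' : (a : K) ≠ 0 := Nat.cast_ne_zero.2 ha.ne'
  have hb' : (b : K) ≠ 0 := Nat.cast_ne_zero.2 hb.ne'
  have hab' : (a + b : K) ≠ 0 := by exact_mod_cast (Nat.add_pos_left ha b).ne'
  push_cast
  field_simp
  ring

theorem sum_fareyPairs_add_sub_div_mul {K : Type*} [Field K] [CharZero K] {M : ℕ}
    (hM : 0 < M) (Q : K) :
    ∑ p ∈ fareyPairs M, (p.1 + p.2 - Q) / (p.1 * p.2) = 2 * ∑ x ∈ Ioc 0 M, (φ x : K) / x - Q := by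
  have expand : ∀ p ∈ fareyPairs M, (p.1 + p.2 - Q) / (p.1 * p.2) =
      (1 / (p.1 : K) + 1 / (p.2 : K)) - Q * (1 / ((p.1 : K) * p.2)) := fun p hp ↦ by
    rw [mem_fareyPairs] at hp
    have h1 : (p.1 : K) ≠ 0 := Nat.cast_ne_zero.2 hp.1.1.ne'
    have h2 : (p.2 : K) ≠ 0 := Nat.cast_ne_zero.2 hp.2.1.1.ne'
    field_simp
    ring
  rw [sum_congr rfl expand, sum_sub_distrib, sum_add_distrib, ← mul_sum,
    sum_fareyPairs_one_div_mul hM, sum_fareyPairs_fst (fun x ↦ 1 / (x : K)),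
    sum_fareyPairs_snd (fun y ↦ 1 / (y : K))]
  simp only [nsmul_eq_mul, mul_one_div]
  ring

section BoundedCoefficients

variable {f : ℕ → ℝ}

theorem abs_sub_sum_Ioc_div_sq_le (hf : ∀ d, |f d| ≤ 1) {L : ℝ}
    (hL : HasSum (fun d : ℕ ↦ f d / (d : ℝ) ^ 2) L) (M : ℕ) :
    |L - ∑ d ∈ Ioc 0 M, f d / (d : ℝ) ^ 2| ≤ 2 / (M + 1) := by
  have partial_sum_eq :
      ∑ d ∈ Ioc 0 M, f d / (d : ℝ) ^ 2 = ∑ d ∈ range (M + 1), f d / (d : ℝ) ^ 2 := by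
    rw [sum_range_eq_add_Ico _ M.succ_pos]
    simp [← Ico_add_one_add_one_eq_Ioc]
  rw [partial_sum_eq]
  refine le_of_tendsto (hL.tendsto_sum_nat.sub_const _).abs ?_
  filter_upwards [Filter.eventually_ge_atTop (M + 1)] with n hn
  rw [← sum_Ico_eq_sub _ hn]
  calc |∑ d ∈ Ico (M + 1) n, f d / (d : ℝ) ^ 2|
      ≤ ∑ d ∈ Ico (M + 1) n, |f d / (d : ℝ) ^ 2| := abs_sum_le_sum_abs _ _
    _ ≤ ∑ d ∈ Ico (M + 1) n, ((d : ℝ) ^ 2)⁻¹ := by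
        gcongr with d
        rw [abs_div, abs_of_nonneg (sq_nonneg (d : ℝ)), ← one_div]
        gcongr
        exact hf d
    _ ≤ 2 / (M + 1) := by
        rw [Ico_add_one_left_eq_Ioo]
        exact sum_Ioo_inv_sq_le M n

theorem abs_sum_div_mul_floor_div_sub_mul_sum_le (hf : ∀ d, |f d| ≤ 1) {Q : ℝ} (hQ : 0 ≤ Q)
    (M : ℕ) :
    |∑ d ∈ Ioc 0 M, f d / d * ⌊Q / d⌋₊ - Q * ∑ d ∈ Ioc 0 M, f d / (d : ℝ) ^ 2| ≤
      1 + Real.log M := by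
  rw [mul_sum, ← sum_sub_distrib]
  calc |∑ d ∈ Ioc 0 M, (f d / d * ⌊Q / d⌋₊ - Q * (f d / (d : ℝ) ^ 2))|
      ≤ ∑ d ∈ Ioc 0 M, |f d / d * ⌊Q / d⌋₊ - Q * (f d / (d : ℝ) ^ 2)| := abs_sum_le_sum_abs _ _
    _ ≤ ∑ d ∈ Ioc 0 M, (d : ℝ)⁻¹ := by
        gcongr with d
        have factor : f d / d * ⌊Q / d⌋₊ - Q * (f d / (d : ℝ) ^ 2) =
            f d * (⌊Q / d⌋₊ - Q / d) * (d : ℝ)⁻¹ := by ring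
        rw [factor, abs_mul, abs_mul, abs_of_nonneg (by positivity : (0 : ℝ) ≤ (d : ℝ)⁻¹)]
        exact mul_le_of_le_one_left (by positivity)
          (mul_le_one₀ (hf d) (abs_nonneg _) (Nat.abs_floor_sub_le (by positivity)))
    _ ≤ 1 + Real.log M := by
        simpa [harmonic_eq_sum_Icc, ← Icc_add_one_left_eq_Ioc] using harmonic_le_one_add_log M

theorem abs_sum_div_mul_floor_div_sub_mul_le (hf : ∀ d, |f d| ≤ 1) {L : ℝ}
    (hL : HasSum (fun d : ℕ ↦ f d / (d : ℝ) ^ 2) L) {Q : ℝ} (hQ : 0 ≤ Q) :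
    |∑ d ∈ Ioc 0 ⌊Q⌋₊, f d / d * ⌊Q / d⌋₊ - Q * L| ≤ 3 + Real.log ⌊Q⌋₊ := by
  set T := ∑ d ∈ Ioc 0 ⌊Q⌋₊, f d / (d : ℝ) ^ 2
  have head := abs_sum_div_mul_floor_div_sub_mul_sum_le hf hQ ⌊Q⌋₊
  have tail : |Q * (L - T)| ≤ 2 :=
    calc |Q * (L - T)| = Q * |L - T| := by rw [abs_mul, abs_of_nonneg hQ]
      _ ≤ (⌊Q⌋₊ + 1) * (2 / (⌊Q⌋₊ + 1)) := by
          gcongr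
          · exact (Nat.lt_floor_add_one Q).le
          · exact abs_sub_sum_Ioc_div_sq_le hf hL ⌊Q⌋₊
      _ = 2 := by field_simp
  rw [abs_le] at *
  constructor <;> linarith

end BoundedCoefficients

theorem abs_intCast_moebius_le_one (d : ℕ) : |(μ d : ℝ)| ≤ 1 :=
  mod_cast ArithmeticFunction.abs_moebius_le_one

theorem hasSum_moebius_div_sq :
    HasSum (fun d : ℕ ↦ (μ d : ℝ) / (d : ℝ) ^ 2) (Real.pi ^ 2 / 6)⁻¹ := by
  have h2 : 1 < (2 : ℂ).re := by norm_num
  have inv_zeta : LSeries (fun d ↦ (μ d : ℂ)) 2 = ((Real.pi : ℂ) ^ 2 / 6)⁻¹ := by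
    rw [← riemannZeta_two, ← LSeries_one_eq_riemannZeta h2]
    exact eq_inv_of_mul_eq_one_right (LSeries_one_mul_Lseries_moebius h2)
  have hs := (ArithmeticFunction.LSeriesSummable_moebius_iff.2 h2).LSeriesHasSum
  rw [inv_zeta, LSeriesHasSum] at hs
  rw [← Complex.hasSum_ofReal]
  convert! hs using 1
  · funext d
    rw [LSeries.term_def₀ (by simp), Complex.cpow_neg, ← div_eq_mul_inv]
    norm_cast
  · norm_cast

theorem sum_divisors_moebius_div (n : ℕ) :
    ∑ d ∈ n.divisors, (μ d : ℝ) / d = (φ n : ℝ) / n := by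
  rcases n.eq_zero_or_pos with rfl | hn
  · simp
  have hn' : (n : ℝ) ≠ 0 := Nat.cast_ne_zero.2 hn.ne'
  have inversion := (ArithmeticFunction.sum_eq_iff_sum_mul_moebius_eq (R := ℝ)
    (f := fun n ↦ (φ n : ℝ)) (g := fun n ↦ (n : ℝ))).1 (fun n _ ↦ mod_cast n.sum_totient) n hn
  rw [eq_div_iff hn', ← inversion, sum_mul,
    Nat.sum_divisorsAntidiagonal (f := fun a b ↦ (μ a : ℝ) * (b : ℝ))]
  refine sum_congr rfl fun d hd ↦ ?_
  rw [Nat.cast_div_charZero (Nat.dvd_of_mem_divisors hd)]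
  ring

theorem sum_totient_div_eq_sum_moebius (M : ℕ) :
    ∑ x ∈ Ioc 0 M, (φ x : ℝ) / x = ∑ d ∈ Ioc 0 M, (μ d : ℝ) / d * (M / d : ℕ) := by
  let f : ArithmeticFunction ℝ := ⟨fun d ↦ (μ d : ℝ) / d, by simp⟩
  refine Eq.trans ?_ (ArithmeticFunction.sum_Ioc_mul_zeta_eq_sum f M)
  refine sum_congr rfl fun x _ ↦ ?_
  rw [ArithmeticFunction.coe_mul_zeta_apply]
  exact (sum_divisors_moebius_div x).symm

theorem abs_sum_totient_div_sub_le {Q : ℝ} (hQ : 0 ≤ Q) :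
    |∑ x ∈ Ioc 0 ⌊Q⌋₊, (φ x : ℝ) / x - Q * (Real.pi ^ 2 / 6)⁻¹| ≤ 3 + Real.log ⌊Q⌋₊ := by
  simpa only [sum_totient_div_eq_sum_moebius, Nat.floor_div_natCast] using
    abs_sum_div_mul_floor_div_sub_mul_le abs_intCast_moebius_le_one hasSum_moebius_div_sq hQ

theorem natCast_add_one_le_rpow {x ε : ℝ} (hx : 0 ≤ x) (h : 2 ≤ x ^ ε) (a : ℕ) :
    (a : ℝ) + 1 ≤ (x ^ a) ^ ε :=
  calc (a : ℝ) + 1 ≤ 2 ^ a := mod_cast Nat.lt_two_pow_self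
    _ ≤ (x ^ ε) ^ a := by gcongr
    _ = (x ^ a) ^ ε := Real.rpow_pow_comm hx ε a

theorem natCast_add_one_le_mul_rpow {x ε : ℝ} (hx : 2 ≤ x) (hε : 0 < ε) (a : ℕ) :
    (a : ℝ) + 1 ≤ (1 + 1 / (ε * Real.log 2)) * (x ^ a) ^ ε := by
  set t := ε * Real.log 2 with ht
  have htpos : 0 < t := by positivity
  calc (a : ℝ) + 1 ≤ (1 + 1 / t) * (t * a + 1) := by
        have : 0 ≤ t * a + 1 / t := by positivity
        have : (1 + 1 / t) * (t * a + 1) = a + 1 + (t * a + 1 / t) := by field_simp; ring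
        linarith
    _ ≤ (1 + 1 / t) * (2 ^ a) ^ ε := by
        gcongr
        rw [Real.rpow_def_of_pos (by positivity), Real.log_pow]
        refine (Real.add_one_le_exp _).trans_eq' ?_
        rw [ht]; ring
    _ ≤ (1 + 1 / t) * (x ^ a) ^ ε := by gcongr

theorem prod_primeFactors_ite_lt_le_pow {K : ℝ} (hK : 1 ≤ K) (B n : ℕ) :
    ∏ p ∈ n.primeFactors, (if p < B then K else 1) ≤ K ^ B := by
  rw [← prod_filter, prod_const]
  refine pow_le_pow_right₀ hK ?_
  calc #{p ∈ n.primeFactors | p < B} ≤ #(range B) :=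
        card_le_card fun p hp ↦ mem_range.2 (mem_filter.1 hp).2
    _ = B := card_range B

theorem exists_card_divisors_le_mul_rpow {ε : ℝ} (hε : 0 < ε) :
    ∃ C : ℝ, 0 < C ∧ ∀ n : ℕ, n ≠ 0 → (#n.divisors : ℝ) ≤ C * (n : ℝ) ^ ε := by
  set K : ℝ := 1 + 1 / (ε * Real.log 2)
  have hK : 1 ≤ K := le_add_of_nonneg_right (by positivity)
  set B : ℕ := ⌈(2 : ℝ) ^ ε⁻¹⌉₊
  have local_bound {p : ℕ} (hp : p.Prime) (a : ℕ) :
      (a : ℝ) + 1 ≤ (if p < B then K else 1) * ((p : ℝ) ^ a) ^ ε := by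
    split_ifs with hpB
    · exact natCast_add_one_le_mul_rpow (mod_cast hp.two_le) hε a
    · rw [one_mul]
      refine natCast_add_one_le_rpow p.cast_nonneg ?_ a
      rw [← Real.rpow_inv_le_iff_of_pos zero_le_two p.cast_nonneg hε]
      exact Nat.ceil_le.1 (not_lt.1 hpB)
  refine ⟨K ^ B, by positivity, fun n hn ↦ ?_⟩
  calc (#n.divisors : ℝ) = ∏ p ∈ n.primeFactors, ((n.factorization p : ℝ) + 1) := by
        rw [Nat.card_divisors hn]; push_cast; rfl
    _ ≤ ∏ p ∈ n.primeFactors, ((if p < B then K else 1) * ((p : ℝ) ^ n.factorization p) ^ ε) :=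
        prod_le_prod (fun _ _ ↦ by positivity)
          fun p hp ↦ local_bound (Nat.prime_of_mem_primeFactors hp) _
    _ = (∏ p ∈ n.primeFactors, if p < B then K else 1) * (n : ℝ) ^ ε := by
        rw [prod_mul_distrib, Real.finsetProd_rpow _ _ fun _ _ ↦ by positivity]
        congr 2
        exact_mod_cast Nat.prod_factorization_pow_eq_self hn
    _ ≤ K ^ B * (n : ℝ) ^ ε := by
        gcongr
        exact prod_primeFactors_ite_lt_le_pow hK B n

/-- The sum `∑ (x + y - Q) / (x y)` over the Farey pairs of order `⌊Q⌋`; for `Q = N / r` and up to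
the factor `N`, it is the inner sum attached to the divisor `r`. -/
noncomputable def fareySum (Q : ℝ) : ℝ :=
  ∑ p ∈ fareyPairs ⌊Q⌋₊, (p.1 + p.2 - Q) / (p.1 * p.2)

theorem fareySum_of_lt_one {Q : ℝ} (hQ : Q < 1) : fareySum Q = 0 := by
  rw [fareySum, Nat.floor_eq_zero.2 hQ]
  rfl

theorem abs_two_div_zeta_two_sub_one_le_one : |2 / (Real.pi ^ 2 / 6) - 1| ≤ 1 := by
  have upper : 2 / (Real.pi ^ 2 / 6) ≤ 2 :=
    div_le_self zero_le_two (by nlinarith [Real.pi_gt_three])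
  have lower : 0 ≤ 2 / (Real.pi ^ 2 / 6) := by positivity
  rw [abs_le]
  constructor <;> linarith

theorem abs_fareySum_sub_le {Q : ℝ} (hQ : 0 ≤ Q) :
    |fareySum Q - (2 / (Real.pi ^ 2 / 6) - 1) * Q| ≤ 6 + 2 * Real.log ⌊Q⌋₊ := by
  rcases lt_or_ge Q 1 with hQ1 | hQ1
  · rw [fareySum_of_lt_one hQ1, zero_sub, abs_neg, abs_mul, abs_of_nonneg hQ]
    have hlog := Real.log_natCast_nonneg ⌊Q⌋₊
    have := mul_le_one₀ abs_two_div_zeta_two_sub_one_le_one hQ hQ1.le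
    linarith
  · have twice : fareySum Q - (2 / (Real.pi ^ 2 / 6) - 1) * Q =
        2 * (∑ x ∈ Ioc 0 ⌊Q⌋₊, (φ x : ℝ) / x - Q * (Real.pi ^ 2 / 6)⁻¹) := by
      rw [fareySum, sum_fareyPairs_add_sub_div_mul (Nat.floor_pos.2 hQ1)]
      ring
    rw [twice, abs_mul, abs_two]
    linarith [abs_sum_totient_div_sub_le hQ]

theorem abs_mul_fareySum_div_sub_le (N r : ℕ) :
    |N * fareySum (N / r) - (2 / (Real.pi ^ 2 / 6) - 1) * (N : ℝ) ^ 2 * (1 / r)| ≤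
      N * (6 + 2 * Real.log N) := by
  have factor : N * fareySum (N / r) - (2 / (Real.pi ^ 2 / 6) - 1) * (N : ℝ) ^ 2 * (1 / r) =
      N * (fareySum (N / r) - (2 / (Real.pi ^ 2 / 6) - 1) * (N / r)) := by ring
  have log_floor_le : Real.log ⌊(N / r : ℝ)⌋₊ ≤ Real.log N := by
    rw [Nat.floor_div_eq_div]
    rcases (N / r).eq_zero_or_pos with h0 | hpos
    · simpa [h0] using Real.log_natCast_nonneg N
    · exact Real.log_le_log (mod_cast hpos) (mod_cast Nat.div_le_self N r)
  rw [factor, abs_mul, Nat.abs_cast]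
  gcongr
  refine (abs_fareySum_sub_le (by positivity)).trans ?_
  gcongr

theorem abs_sum_mul_fareySum_sub_le (s : Finset ℕ) (N : ℕ) :
    |∑ r ∈ s with r ≤ N, N * fareySum (N / r) -
        (2 / (Real.pi ^ 2 / 6) - 1) * (N : ℝ) ^ 2 * ∑ r ∈ s, (1 : ℝ) / r| ≤
      #s * (N * (6 + 2 * Real.log N)) := by
  have drop_filter : ∑ r ∈ s with r ≤ N, N * fareySum (N / r) =
      ∑ r ∈ s, N * fareySum (N / r) := by
    refine sum_filter_of_ne fun r _ ↦ ?_
    contrapose!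
    intro hr
    rw [fareySum_of_lt_one, mul_zero]
    rw [div_lt_one (mod_cast hr.pos)]
    exact_mod_cast hr
  rw [drop_filter, mul_sum, ← sum_sub_distrib, ← nsmul_eq_mul]
  exact (abs_sum_le_sum_abs _ _).trans
    (sum_le_card_nsmul _ _ _ fun r _ ↦ abs_mul_fareySum_div_sub_le N r)

theorem sum_ite_eq_sum_fareyPairs_div {α : Type*} [AddCommMonoid α] (N : ℕ) {r : ℕ} (hr : 0 < r)
    (f : ℕ → ℕ → α) :
    (∑ x ∈ Icc 1 N, ∑ y ∈ Icc 1 N,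
      if x * r ≤ N ∧ y * r ≤ N ∧ N < (x + y) * r ∧ Nat.gcd x y = 1 then f x y else 0) =
      ∑ p ∈ fareyPairs (N / r), f p.1 p.2 := by
  rw [← sum_product', ← sum_filter]
  refine sum_congr ?_ fun _ _ ↦ rfl
  ext p
  have hN : N / r ≤ N := Nat.div_le_self N r
  simp only [mem_filter, mem_product, mem_Icc, mem_fareyPairs, ← Nat.le_div_iff_mul_le hr,
    ← Nat.div_lt_iff_lt_mul hr, Nat.coprime_iff_gcd_eq_one]
  grind

theorem sum_ite_eq_mul_fareySum (N : ℕ) {r : ℕ} (hr : 0 < r) :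
    (∑ x ∈ Icc 1 N, ∑ y ∈ Icc 1 N,
      if x * r ≤ N ∧ y * r ≤ N ∧ N < (x + y) * r ∧ Nat.gcd x y = 1 then
        (N : ℝ) * ((x : ℝ) + (y : ℝ) - (N : ℝ) / (r : ℝ)) / ((x : ℝ) * (y : ℝ))
      else 0) = N * fareySum (N / r) := by
  rw [sum_ite_eq_sum_fareyPairs_div N hr
      (fun x y ↦ (N : ℝ) * ((x : ℝ) + (y : ℝ) - (N : ℝ) / (r : ℝ)) / ((x : ℝ) * (y : ℝ))),
    fareySum, Nat.floor_div_eq_div, mul_sum]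
  simp only [mul_div_assoc]

theorem exists_card_divisors_le_mul_rpow_of_le_mul_pow (A k : ℕ) {ε : ℝ} (hε : 0 < ε) :
    ∃ C : ℝ, 0 < C ∧ ∀ n N : ℕ, n ≠ 0 → 0 < N → n ≤ A * N ^ k →
      (#n.divisors : ℝ) ≤ C * (N : ℝ) ^ ε := by
  set δ : ℝ := ε / (k + 1)
  have hδ : 0 < δ := by positivity
  have hkδ : k * δ ≤ ε := by
    rw [mul_div_assoc', div_le_iff₀ (by positivity)]
    linarith
  obtain ⟨C, hC, card_le⟩ := exists_card_divisors_le_mul_rpow hδ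
  refine ⟨C * (A + 1 : ℝ) ^ δ, by positivity, fun n N hn hN hnN ↦ ?_⟩
  calc (#n.divisors : ℝ) ≤ C * (n : ℝ) ^ δ := card_le n hn
    _ ≤ C * ((A + 1) * (N : ℝ) ^ k) ^ δ := by
        gcongr
        exact_mod_cast hnN.trans (Nat.mul_le_mul_right _ A.le_succ)
    _ = C * (A + 1 : ℝ) ^ δ * (N : ℝ) ^ (k * δ) := by
        rw [Real.mul_rpow (by positivity) (by positivity), ← Real.rpow_natCast_mul N.cast_nonneg,
          mul_assoc]
    _ ≤ C * (A + 1 : ℝ) ^ δ * (N : ℝ) ^ ε := by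
        gcongr
        exact_mod_cast hN

theorem add_mul_log_le_mul_rpow {a b x ε : ℝ} (ha : 0 ≤ a) (hb : 0 ≤ b) (hx : 1 ≤ x) (hε : 0 < ε) :
    a + b * Real.log x ≤ (a + b / ε) * x ^ ε :=
  calc a + b * Real.log x ≤ a * x ^ ε + b * (x ^ ε / ε) := by
        gcongr
        · exact le_mul_of_one_le_right ha (Real.one_le_rpow hx hε.le)
        · exact Real.log_le_rpow_div (zero_le_one.trans hx) hε
    _ = (a + b / ε) * x ^ ε := by ring

theorem stmt5_general (A k : ℕ) :
    ∀ ε : ℝ, 0 < ε → ∃ C : ℝ, 0 < C ∧ ∀ h N : ℕ, 1 ≤ h → h ≤ A * N ^ k →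
      |(∑ r ∈ h.divisors.filter (· ≤ N), ∑ x ∈ Finset.Icc 1 N, ∑ y ∈ Finset.Icc 1 N,
          if x * r ≤ N ∧ y * r ≤ N ∧ N < (x + y) * r ∧ Nat.gcd x y = 1 then
            (N : ℝ) * ((x : ℝ) + (y : ℝ) - (N : ℝ) / (r : ℝ)) / ((x : ℝ) * (y : ℝ))
          else 0)
        - (2 / (Real.pi ^ 2 / 6) - 1) * (N : ℝ) ^ 2 * ∑ r ∈ h.divisors, (1 : ℝ) / r| ≤
        C * (N : ℝ) ^ ((1 : ℝ) + ε) := by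
  intro ε hε
  obtain ⟨C, hC, card_le⟩ :=
    exists_card_divisors_le_mul_rpow_of_le_mul_pow A k (half_pos hε)
  refine ⟨C * (6 + 2 / (ε / 2)), by positivity, fun h N hh hhN ↦ ?_⟩
  rcases N.eq_zero_or_pos with rfl | hN
  · simpa using by positivity
  rw [sum_congr rfl fun r hr ↦
    sum_ite_eq_mul_fareySum N (Nat.pos_of_mem_divisors (mem_filter.1 hr).1)]
  calc _ ≤ #h.divisors * (N * (6 + 2 * Real.log N)) := abs_sum_mul_fareySum_sub_le h.divisors N
    _ ≤ C * (N : ℝ) ^ (ε / 2) * (N * ((6 + 2 / (ε / 2)) * (N : ℝ) ^ (ε / 2))) := by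
        gcongr
        · exact card_le h N (Nat.one_le_iff_ne_zero.1 hh) hN hhN
        · exact add_mul_log_le_mul_rpow (by norm_num) zero_le_two (mod_cast hN) (half_pos hε)
    _ = C * (6 + 2 / (ε / 2)) * (N * ((N : ℝ) ^ (ε / 2) * (N : ℝ) ^ (ε / 2))) := by ring
    _ = C * (6 + 2 / (ε / 2)) * (N : ℝ) ^ (1 + ε) := by
        rw [← Real.rpow_add (mod_cast hN), add_halves,
          Real.rpow_one_add' N.cast_nonneg (by positivity)]

theorem stmt5 :
    ∀ ε : ℝ, 0 < ε → ∃ C : ℝ, 0 < C ∧ ∀ h N : ℕ, 1 ≤ h → h ≤ 2 * N ^ 2 →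
      |(∑ r ∈ h.divisors.filter (· ≤ N), ∑ x ∈ Finset.Icc 1 N, ∑ y ∈ Finset.Icc 1 N,
          if x * r ≤ N ∧ y * r ≤ N ∧ N < (x + y) * r ∧ Nat.gcd x y = 1 then
            (N : ℝ) * ((x : ℝ) + (y : ℝ) - (N : ℝ) / (r : ℝ)) / ((x : ℝ) * (y : ℝ))
          else 0)
        - (2 / (Real.pi ^ 2 / 6) - 1) * (N : ℝ) ^ 2 * ∑ r ∈ h.divisors, (1 : ℝ) / r| ≤
        C * (N : ℝ) ^ ((1 : ℝ) + ε) :=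
  stmt5_general 2 2
end

section
/- There exists an absolute constant C > 0 such that for every real number X ≥ 1, one has |S(X) − (2 − ζ(2))·X| ≤ C, where S(X) = Σ_{x,y} (x + y − X)/(x·y) with the sum over pairs of positive integers x, y satisfying x ≤ X, y ≤ X and x + y > X. -/
/-- `S X = Σ_{1 ≤ x,y ≤ X, x+y > X} (x + y − X)/(x·y)`, summed over positive integers `x, y`. -/
noncomputable def S (X : ℝ) : ℝ :=
  ∑ x ∈ Finset.Icc 1 ⌊X⌋₊, ∑ y ∈ Finset.Icc 1 ⌊X⌋₊,
    if X < (x : ℝ) + (y : ℝ) then ((x : ℝ) + (y : ℝ) - X) / ((x : ℝ) * (y : ℝ)) else 0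

/-!
Summing over `y` first, each `x ≤ N = ⌊X⌋` contributes `1 + (1 - X / x) (H N - H (N - x))`, where
`H` denotes the harmonic numbers. Two identities, both by induction on `N`, evaluate the sum over
`x`: the differences `H N - H (N - x)` add up to `N`, and weighted by `1 / x` they add up to
`∑_{x ≤ N} 1 / x²`. Hence `S X = 2 N - X ∑_{x ≤ N} 1 / x²` exactly, and the tail of the series for
`ζ(2)` beyond `N` is between `0` and `1 / N`.
-/

open Finset

lemma sum_Icc_inv_reflect (N : ℕ) :
    ∑ x ∈ Icc 1 N, ((N : ℚ) + 1 - x)⁻¹ = harmonic N := by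
  rw [harmonic_eq_sum_Icc]
  refine sum_nbij' (N + 1 - ·) (N + 1 - ·) ?_ ?_ ?_ ?_ fun x hx ↦ ?_
  any_goals grind
  rw [Nat.cast_sub (by grind), Nat.cast_add_one]

lemma harmonic_succ_sub_harmonic_succ_sub {N x : ℕ} (hx : x ≤ N) :
    harmonic (N + 1) - harmonic (N + 1 - x) =
      harmonic N - harmonic (N - x) + (((N : ℚ) + 1)⁻¹ - ((N : ℚ) + 1 - x)⁻¹) := by
  rw [Nat.sub_add_comm hx, harmonic_succ, harmonic_succ]
  push_cast [hx]
  ring_nf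

lemma sum_Icc_harmonic_sub (N : ℕ) :
    ∑ x ∈ Icc 1 N, (harmonic N - harmonic (N - x)) = N := by
  induction N with
  | zero => simp
  | succ N ih =>
    rw [sum_Icc_succ_top (by omega),
      sum_congr rfl fun x hx ↦ harmonic_succ_sub_harmonic_succ_sub (mem_Icc.mp hx).2,
      sum_add_distrib, sum_sub_distrib _ (fun x : ℕ ↦ ((N : ℚ) + 1 - x)⁻¹), ih,
      sum_Icc_inv_reflect, Nat.sub_self, harmonic_zero, harmonic_succ]
    simp only [sum_const, Nat.card_Icc, nsmul_eq_mul]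
    push_cast
    field_simp
    ring

lemma sum_Icc_harmonic_sub_div (N : ℕ) :
    ∑ x ∈ Icc 1 N, (harmonic N - harmonic (N - x)) / x = ∑ x ∈ Icc 1 N, ((x : ℚ) ^ 2)⁻¹ := by
  induction N with
  | zero => simp
  | succ N ih =>
    have increment : ∀ x ∈ Icc 1 N, (harmonic (N + 1) - harmonic (N + 1 - x)) / x =
        (harmonic N - harmonic (N - x)) / x - ((N : ℚ) + 1)⁻¹ * ((N : ℚ) + 1 - x)⁻¹ := by
      intro x hx
      obtain ⟨hx1, hxN⟩ := mem_Icc.mp hx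
      have hx0 : (x : ℚ) ≠ 0 := by positivity
      have hsub : (N : ℚ) + 1 - x ≠ 0 := by
        have : (x : ℚ) ≤ N := mod_cast hxN
        linarith
      rw [harmonic_succ_sub_harmonic_succ_sub hxN]
      field_simp
      ring
    rw [sum_Icc_succ_top (by omega), sum_Icc_succ_top (by omega), sum_congr rfl increment,
      sum_sub_distrib, ← mul_sum, ih, sum_Icc_inv_reflect, Nat.sub_self, harmonic_zero,
      harmonic_succ]
    push_cast
    field_simp
    ring

lemma sum_Ioc_inv_eq_harmonic_sub {m n : ℕ} (h : m ≤ n) :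
    ∑ y ∈ Ioc m n, (y : ℚ)⁻¹ = harmonic n - harmonic m := by
  rw [harmonic_eq_sum_Icc, harmonic_eq_sum_Icc, ← zero_add 1, Icc_add_one_left_eq_Ioc,
    Icc_add_one_left_eq_Ioc, ← sum_Ioc_consecutive _ m.zero_le h, add_sub_cancel_left]

lemma filter_Icc_lt_add_eq_Ioc {R : Type*} [Semiring R] [LinearOrder R] [IsStrictOrderedRing R]
    [FloorSemiring R] {X : R} (hX : 0 ≤ X) {x : ℕ} (hx : x ≤ ⌊X⌋₊) :
    {y ∈ Icc 1 ⌊X⌋₊ | X < (x : R) + (y : ℕ)} = Ioc (⌊X⌋₊ - x) ⌊X⌋₊ := by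
  ext y
  rw [mem_filter, mem_Icc, mem_Ioc, ← Nat.cast_add, ← Nat.floor_lt hX]
  omega

lemma sum_Ioc_add_sub_div_mul {K : Type*} [Field K] [CharZero K] (X : K) {N x : ℕ} (hx : x ≠ 0)
    (hxN : x ≤ N) :
    ∑ y ∈ Ioc (N - x) N, ((x : K) + y - X) / (x * y) =
      1 + (1 - X / x) * (harmonic N - harmonic (N - x) : ℚ) := by
  have split : ∀ y ∈ Ioc (N - x) N,
      ((x : K) + y - X) / (x * y) = (x : K)⁻¹ + (1 - X / x) * (y : K)⁻¹ := by
    intro y hy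
    have hx0 : (x : K) ≠ 0 := Nat.cast_ne_zero.mpr hx
    have hy0 : (y : K) ≠ 0 := Nat.cast_ne_zero.mpr (by grind)
    field_simp
    ring
  rw [sum_congr rfl split, sum_add_distrib, ← mul_sum, ← sum_Ioc_inv_eq_harmonic_sub (by omega)]
  simp [Nat.sub_sub_self hxN, hx]

lemma S_eq {X : ℝ} (hX : 0 ≤ X) :
    S X = 2 * ⌊X⌋₊ - X * ∑ x ∈ Icc 1 ⌊X⌋₊, ((x : ℝ) ^ 2)⁻¹ := by
  set N := ⌊X⌋₊
  have sum_diff : ∑ x ∈ Icc 1 N, ((harmonic N - harmonic (N - x) : ℚ) : ℝ) = N :=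
    mod_cast sum_Icc_harmonic_sub N
  have sum_diff_div : ∑ x ∈ Icc 1 N, ((harmonic N - harmonic (N - x) : ℚ) : ℝ) / x =
      ∑ x ∈ Icc 1 N, ((x : ℝ) ^ 2)⁻¹ := by
    have sum_eq := congrArg (Rat.cast : ℚ → ℝ) (sum_Icc_harmonic_sub_div N)
    push_cast at sum_eq ⊢
    exact sum_eq
  calc S X
      = ∑ x ∈ Icc 1 N, ∑ y ∈ Ioc (N - x) N, ((x : ℝ) + y - X) / (x * y) := by
        refine sum_congr rfl fun x hx ↦ ?_
        rw [← sum_filter, filter_Icc_lt_add_eq_Ioc hX (mem_Icc.mp hx).2]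
    _ = ∑ x ∈ Icc 1 N, (1 + (1 - X / x) * (harmonic N - harmonic (N - x) : ℚ)) :=
        sum_congr rfl fun x hx ↦
          sum_Ioc_add_sub_div_mul X (Nat.one_le_iff_ne_zero.mp (mem_Icc.mp hx).1) (mem_Icc.mp hx).2
    _ = ∑ x ∈ Icc 1 N, (1 + (harmonic N - harmonic (N - x) : ℚ) -
          X * ((harmonic N - harmonic (N - x) : ℚ) / x)) :=
        sum_congr rfl fun x _ ↦ by ring
    _ = 2 * N - X * ∑ x ∈ Icc 1 N, ((x : ℝ) ^ 2)⁻¹ := by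
        rw [sum_sub_distrib, sum_add_distrib, ← mul_sum, sum_diff, sum_diff_div, sum_const,
          Nat.card_Icc, nsmul_one, Nat.add_sub_cancel, two_mul]

lemma sum_Icc_inv_sq_le_pi_sq_div_six (N : ℕ) :
    ∑ x ∈ Icc 1 N, ((x : ℝ) ^ 2)⁻¹ ≤ Real.pi ^ 2 / 6 := by
  simpa only [one_div] using
    sum_le_hasSum (Icc 1 N) (fun _ _ ↦ by positivity) hasSum_zeta_two

lemma pi_sq_div_six_le_sum_Icc_inv_sq_add {N : ℕ} (hN : N ≠ 0) :
    Real.pi ^ 2 / 6 ≤ ∑ x ∈ Icc 1 N, ((x : ℝ) ^ 2)⁻¹ + (N : ℝ)⁻¹ := by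
  refine le_of_tendsto' ((Filter.tendsto_add_atTop_iff_nat (N + 1)).mpr
    hasSum_zeta_two.tendsto_sum_nat) fun k ↦ ?_
  calc ∑ x ∈ range (k + (N + 1)), 1 / (x : ℝ) ^ 2
      = ∑ x ∈ Ioc 0 (k + N), ((x : ℝ) ^ 2)⁻¹ := by
        rw [← add_assoc, range_eq_Ico, Ico_add_one_right_eq_Icc, Icc_eq_cons_Ioc (Nat.zero_le _),
          sum_cons]
        simp
    _ = ∑ x ∈ Icc 1 N, ((x : ℝ) ^ 2)⁻¹ + ∑ x ∈ Ioc N (k + N), ((x : ℝ) ^ 2)⁻¹ :=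
        (sum_Ioc_consecutive _ N.zero_le (Nat.le_add_left N k)).symm
    _ ≤ ∑ x ∈ Icc 1 N, ((x : ℝ) ^ 2)⁻¹ + (N : ℝ)⁻¹ := by
        gcongr
        exact (sum_Ioc_inv_sq_le_sub hN (Nat.le_add_left N k)).trans
          (sub_le_self _ (by positivity))

lemma abs_S_sub_mul_le_two {X : ℝ} (hX : 1 ≤ X) :
    |S X - (2 - Real.pi ^ 2 / 6) * X| ≤ 2 := by
  have hX0 : 0 ≤ X := zero_le_one.trans hX
  have hN : ⌊X⌋₊ ≠ 0 := (Nat.floor_pos.mpr hX).ne'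
  have floor_le : (⌊X⌋₊ : ℝ) ≤ X := Nat.floor_le hX0
  have lt_floor : X < ⌊X⌋₊ + 1 := Nat.lt_floor_add_one X
  set tail : ℝ := Real.pi ^ 2 / 6 - ∑ x ∈ Icc 1 ⌊X⌋₊, ((x : ℝ) ^ 2)⁻¹
  have error_eq : S X - (2 - Real.pi ^ 2 / 6) * X = X * tail - 2 * (X - ⌊X⌋₊) := by
    rw [S_eq hX0]; ring
  have mul_tail_nonneg : 0 ≤ X * tail :=
    mul_nonneg hX0 (sub_nonneg.mpr (sum_Icc_inv_sq_le_pi_sq_div_six _))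
  have mul_tail_le : X * tail ≤ 2 := calc
    X * tail ≤ X * (⌊X⌋₊ : ℝ)⁻¹ := by
      gcongr
      exact sub_le_iff_le_add'.mpr (pi_sq_div_six_le_sum_Icc_inv_sq_add hN)
    _ ≤ 2 := by
      have one_le : (1 : ℝ) ≤ ⌊X⌋₊ := mod_cast Nat.one_le_iff_ne_zero.mpr hN
      rw [← div_eq_mul_inv, div_le_iff₀ (by positivity)]
      linarith
  rw [error_eq, abs_le]
  constructor <;> linarith

theorem stmt6 :
    ∃ C : ℝ, 0 < C ∧ ∀ X : ℝ, 1 ≤ X → |S X - (2 - Real.pi ^ 2 / 6) * X| ≤ C :=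
  ⟨2, two_pos, fun _ hX ↦ abs_S_sub_mul_le_two hX⟩
end
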